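/- Assume a−b is odd and N_m ≠ 0, and let k = max{ j ∈ ℤ : N_{m−j} ≠ 0 } (so k ≥ 0). Then for a general linear form L ∈ R_1, setting S = R/(L) ≅ K[x,y] and letting φ̄ : ⊕_{i=1}^{n+2} S(−a_i) → ⊕_{j=1}^{n} S(−b_j) be the map induced by φ, the kernel of φ̄ is a free graded S-module isomorphic to S(−(m−k)) ⊕ S(−(m+k+1)) (this expresses that the restriction of the associated bundle to a general line splits as O(−k−1) ⊕ O(k) after normalization). -/

import Mathlib

open MvPolynomial

noncomputable section

variable {K : Type*} [Field K]

/-- `p` is homogeneous of (integer) degree `d`; for `d < 0` this forces `p = 0`. -/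
def homog (p : MvPolynomial (Fin 3) K) (d : ℤ) : Prop :=
  IsWeightedHomogeneous (fun _ : Fin 3 => (1 : ℤ)) p d

/-- The degree-`d` graded piece of `⊕_{i=1}^{N} R(-a i)`, as a `K`-subspace of
`Fin N → R`, `R = K[x,y,z]`. -/
def degPiece (N : ℕ) (a : Fin N → ℤ) (d : ℤ) :
    Submodule K (Fin N → MvPolynomial (Fin 3) K) :=
  Submodule.pi Set.univ fun i =>
    weightedHomogeneousSubmodule K (fun _ : Fin 3 => (1 : ℤ)) (d - a i)

lemma mem_degPiece {N : ℕ} {a : Fin N → ℤ} {d : ℤ} {v : Fin N → MvPolynomial (Fin 3) K} :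
    v ∈ degPiece (K := K) N a d ↔ ∀ i, homog (v i) (d - a i) := by
  simp [degPiece, Submodule.mem_pi, mem_weightedHomogeneousSubmodule, homog]

/-- The map `φ : ⊕ R(-a i) → ⊕ R(-b j)` given by the matrix `Φ`, as a `K`-linear map. -/
def phiK (n : ℕ) (Φ : Matrix (Fin n) (Fin (n + 2)) (MvPolynomial (Fin 3) K)) :
    (Fin (n + 2) → MvPolynomial (Fin 3) K) →ₗ[K] (Fin n → MvPolynomial (Fin 3) K) :=
  (Matrix.mulVecLin Φ).restrictScalars K

/-- The degree-`d` graded piece of `N = ker φ`. -/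
def Nd (n : ℕ) (a : Fin (n + 2) → ℤ) (Φ : Matrix (Fin n) (Fin (n + 2)) (MvPolynomial (Fin 3) K))
    (d : ℤ) : Submodule K (Fin (n + 2) → MvPolynomial (Fin 3) K) :=
  degPiece (n + 2) a d ⊓ LinearMap.ker (phiK n Φ)

/-- The image of the degree-`d` piece of `F` inside the degree-`d` piece of `G`,
viewed as a subspace of the latter. -/
def MdSub (n : ℕ) (a : Fin (n + 2) → ℤ) (b : Fin n → ℤ)
    (Φ : Matrix (Fin n) (Fin (n + 2)) (MvPolynomial (Fin 3) K)) (d : ℤ) :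
    Submodule K ↥(degPiece (K := K) n b d) :=
  Submodule.comap (degPiece (K := K) n b d).subtype
    (Submodule.map (phiK n Φ) (degPiece (n + 2) a d))

/-- The degree-`d` graded piece of `M = coker φ`. -/
abbrev Md (n : ℕ) (a : Fin (n + 2) → ℤ) (b : Fin n → ℤ)
    (Φ : Matrix (Fin n) (Fin (n + 2)) (MvPolynomial (Fin 3) K)) (d : ℤ) :=
  ↥(degPiece (K := K) n b d) ⧸ MdSub n a b Φ d

/-- Multiplication by `L` on tuples of polynomials, as a `K`-linear map. -/
def mulL (N : ℕ) (L : MvPolynomial (Fin 3) K) :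
    (Fin N → MvPolynomial (Fin 3) K) →ₗ[K] (Fin N → MvPolynomial (Fin 3) K) :=
  ((LinearMap.lsmul (MvPolynomial (Fin 3) K) (Fin N → MvPolynomial (Fin 3) K)) L).restrictScalars K

lemma mulL_apply {N : ℕ} (L : MvPolynomial (Fin 3) K) (v : Fin N → MvPolynomial (Fin 3) K) :
    mulL N L v = L • v := rfl

lemma mulL_mem {N : ℕ} {a : Fin N → ℤ} {L : MvPolynomial (Fin 3) K} (hL : homog L 1)
    {d : ℤ} {v : Fin N → MvPolynomial (Fin 3) K} (hv : v ∈ degPiece (K := K) N a (d - 1)) :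
    mulL N L v ∈ degPiece (K := K) N a d := by
  rw [mem_degPiece] at hv ⊢
  intro i
  have h := hL.mul (hv i)
  have e : (1 : ℤ) + (d - 1 - a i) = d - a i := by ring
  rw [e] at h
  simpa [mulL_apply, smul_eq_mul, homog] using h

/-- Multiplication by `L` from the degree-`d-1` piece of `G` to the degree-`d` piece. -/
def mulLres (n : ℕ) (b : Fin n → ℤ) (L : MvPolynomial (Fin 3) K) (hL : homog L 1) (d : ℤ) :
    ↥(degPiece (K := K) n b (d - 1)) →ₗ[K] ↥(degPiece (K := K) n b d) :=
  (mulL n L).restrict fun _ hv => mulL_mem hL hv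

lemma mulLres_comap (n : ℕ) (a : Fin (n + 2) → ℤ) (b : Fin n → ℤ)
    (Φ : Matrix (Fin n) (Fin (n + 2)) (MvPolynomial (Fin 3) K))
    (L : MvPolynomial (Fin 3) K) (hL : homog L 1) (d : ℤ) :
    MdSub n a b Φ (d - 1) ≤ Submodule.comap (mulLres n b L hL d) (MdSub n a b Φ d) := by
  rintro ⟨w, hw⟩ hmem
  obtain ⟨v, hv, hφv⟩ := hmem
  refine ⟨mulL (n + 2) L v, mulL_mem hL hv, ?_⟩
  show phiK n Φ (mulL (n + 2) L v) = ((mulLres n b L hL d) ⟨w, hw⟩ : Fin n → MvPolynomial (Fin 3) K)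
  have : phiK n Φ (mulL (n + 2) L v) = L • phiK n Φ v := by
    simp [phiK, mulL_apply]
  rw [this, hφv]
  rfl

/-- The map induced by multiplication by `L` from `M_{d-1}` to `M_d`,
where `M = coker φ`. -/
def mulLmap (n : ℕ) (a : Fin (n + 2) → ℤ) (b : Fin n → ℤ)
    (Φ : Matrix (Fin n) (Fin (n + 2)) (MvPolynomial (Fin 3) K))
    (L : MvPolynomial (Fin 3) K) (hL : homog L 1) (d : ℤ) :
    Md n a b Φ (d - 1) →ₗ[K] Md n a b Φ d :=
  Submodule.mapQ (MdSub n a b Φ (d - 1)) (MdSub n a b Φ d) (mulLres n b L hL d)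
    (mulLres_comap n a b Φ L hL d)

/-- The linear form with coefficient vector `c`. -/
def linform (c : Fin 3 → K) : MvPolynomial (Fin 3) K := ∑ i, C (c i) * X i

lemma homog_linform (c : Fin 3 → K) : homog (linform c) 1 := by
  rw [homog, ← mem_weightedHomogeneousSubmodule]
  refine sum_mem fun i _ => ?_
  rw [mem_weightedHomogeneousSubmodule]
  simpa using (isWeightedHomogeneous_C (fun _ : Fin 3 => (1 : ℤ)) (c i)).mul
    (isWeightedHomogeneous_X K (fun _ : Fin 3 => (1 : ℤ)) i)

/-- Finite length of `coker φ`: all sufficiently high graded pieces vanish. -/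
def FiniteColength (n : ℕ) (a : Fin (n + 2) → ℤ) (b : Fin n → ℤ)
    (Φ : Matrix (Fin n) (Fin (n + 2)) (MvPolynomial (Fin 3) K)) : Prop :=
  ∃ D : ℤ, ∀ d : ℤ, D ≤ d →
    degPiece (K := K) n b d ≤ Submodule.map (phiK n Φ) (degPiece (n + 2) a d)

end

/-!
A nonzero element `s` of `N` of minimal degree has no common prime factor, since dividing by one
would lower its degree. So the entries of `s` vanish together only in codimension two, and on a
general line they have no common zero: after restriction the ideal they generate contains powers
of both coordinates `x` and `y`.

On the line the maximal minors of `Φ` are the Plücker coordinates `ω` of its kernel, and a kernel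
element `v` completes `s` to a basis as soon as `s ∧ v = ω`. Contracting `ω` with a covector gives,
for each `f` in the ideal of `s`, a kernel element `V` with `s ∧ V = f • ω`; take this for
`f = x ^ p` and `f = y ^ p`. The obstruction to gluing the two into a single `v` is a form of degree
at least `2 p - 1`, by the instability of `s`, and such a form lies in `(x ^ p, y ^ p)`.
-/

open Matrix

section KernelBasis

variable {T ι κ : Type*} [CommRing T]

/-- The vectors `u` and `v` form a basis of the kernel of the matrix `Ψ`. Spelled out by unique
existence of coordinates, so as not to mention the submodule type of the kernel. -/
def IsKernelBasis [Fintype ι] (Ψ : Matrix κ ι T) (u v : ι → T) : Prop :=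
  Ψ *ᵥ u = 0 ∧ Ψ *ᵥ v = 0 ∧ ∀ w, Ψ *ᵥ w = 0 → ∃! rs : T × T, w = rs.1 • u + rs.2 • v

lemma map_mulVec_comp [Fintype ι] {T' F : Type*} [CommRing T'] [FunLike F T T']
    [RingHomClass F T T'] (f : F) (Ψ : Matrix κ ι T) (w : ι → T) :
    Ψ.map f *ᵥ (f ∘ w) = f ∘ (Ψ *ᵥ w) :=
  funext fun i => ((f : T →+* T').map_mulVec Ψ w i).symm

lemma IsKernelBasis.map [Fintype ι] {T' F : Type*} [CommRing T'] [EquivLike F T T']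
    [RingEquivClass F T T'] {Ψ : Matrix κ ι T} {u v : ι → T} (h : IsKernelBasis Ψ u v) (E : F) :
    IsKernelBasis (Ψ.map E) (E ∘ u) (E ∘ v) := by
  have comp_zero : (E ∘ (0 : κ → T)) = 0 := funext fun _ => map_zero E
  have comp_combination (r₁ r₂ : T) :
      E ∘ (r₁ • u + r₂ • v) = E r₁ • (E ∘ u) + E r₂ • (E ∘ v) :=
    funext fun _ => by simp
  obtain ⟨hu, hv, hbasis⟩ := h
  refine ⟨by rw [map_mulVec_comp, hu, comp_zero], by rw [map_mulVec_comp, hv, comp_zero],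
    fun w hw => ?_⟩
  obtain ⟨w, rfl⟩ := (EquivLike.surjective E).comp_left w
  rw [map_mulVec_comp, ← comp_zero] at hw
  obtain ⟨⟨r₁, r₂⟩, hr, hunique⟩ := hbasis w ((EquivLike.injective E).comp_left hw)
  refine ⟨(E r₁, E r₂), by simp only [hr, comp_combination], fun ⟨q₁, q₂⟩ hq => ?_⟩
  obtain ⟨q₁, rfl⟩ := EquivLike.surjective E q₁
  obtain ⟨q₂, rfl⟩ := EquivLike.surjective E q₂
  rw [← comp_combination] at hq
  obtain ⟨rfl, rfl⟩ := Prod.mk.inj (hunique (q₁, q₂) ((EquivLike.injective E).comp_left hq))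
  rfl

/-- The array of `2 × 2` minors of the two-column matrix with columns `s` and `w`, that is, the
coordinates of the bivector `s ∧ w`, as a linear map in `w`. -/
def wedge (s : ι → T) : (ι → T) →ₗ[T] (ι → ι → T) where
  toFun w i j := s i * w j - s j * w i
  map_add' w w' := by ext i j; simp only [Pi.add_apply]; ring
  map_smul' r w := by
    ext i j; simp only [Pi.smul_apply, smul_eq_mul, RingHom.id_apply]; ring

lemma wedge_apply (s w : ι → T) (i j : ι) : wedge s w i j = s i * w j - s j * w i := rfl

lemma wedge_self (s : ι → T) : wedge s s = 0 := by
  ext i j; simp [wedge_apply, mul_comm]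

lemma eq_zero_of_wedge_eq_zero [IsDomain T] {s w : ι → T} {i : ι} (hs : s i ≠ 0)
    (h : wedge s w = 0) (hw : w i = 0) : w = 0 := by
  ext j
  have := congrFun₂ h i j
  simpa [wedge_apply, hw, hs] using this

lemma exists_smul_eq_smul_of_wedge_eq_zero {s w : ι → T} (h : wedge s w = 0) {f : T}
    (hf : f ∈ Ideal.span (Set.range s)) : ∃ r : T, f • w = r • s := by
  induction hf using Submodule.span_induction with
  | mem f hf =>
    obtain ⟨i, rfl⟩ := hf
    exact ⟨w i, funext fun j => by
      simpa [wedge_apply, sub_eq_zero, mul_comm] using congrFun₂ h i j⟩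
  | zero => exact ⟨0, by simp⟩
  | add f g _ _ hf hg =>
    obtain ⟨⟨r, hr⟩, r', hr'⟩ := hf, hg
    exact ⟨r + r', by rw [add_smul, add_smul, hr, hr']⟩
  | smul c f _ hf =>
    obtain ⟨r, hr⟩ := hf
    exact ⟨c * r, by rw [smul_assoc, hr, mul_smul]⟩

lemma exists_eq_smul_of_isRelPrime [IsDomain T] [DecompositionMonoid T] {M : Type*}
    [AddCommGroup M] [Module T M] [Module.IsTorsionFree T M] {f g r₀ r₁ : T} {u v : M}
    (hfg : IsRelPrime f g) (hf : f ≠ 0) (hv : v ≠ 0) (h₀ : f • u = r₀ • v)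
    (h₁ : g • u = r₁ • v) : ∃ r : T, u = r • v := by
  have hcross : g * r₀ = f * r₁ := smul_left_injective T hv <| by
    simp only [mul_smul, ← h₀, ← h₁, smul_comm f g u]
  obtain ⟨r, rfl⟩ : f ∣ r₀ := hfg.dvd_of_dvd_mul_left ⟨r₁, hcross⟩
  exact ⟨r, smul_right_injective M hf (by simp only [h₀, mul_smul])⟩

lemma ne_zero_of_mem_span_range {s : ι → T} {f : T} (hf₀ : f ≠ 0)
    (hf : f ∈ Ideal.span (Set.range s)) : s ≠ 0 := by
  rintro rfl
  have hle : Ideal.span (Set.range (0 : ι → T)) ≤ ⊥ := by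
    rw [Ideal.span_le]
    rintro _ ⟨i, rfl⟩
    rfl
  exact hf₀ (hle hf)

lemma exists_eq_smul_of_wedge_eq_zero [IsDomain T] [DecompositionMonoid T] {s w : ι → T}
    {f g : T} (hfg : IsRelPrime f g) (hf₀ : f ≠ 0) (hf : f ∈ Ideal.span (Set.range s))
    (hg : g ∈ Ideal.span (Set.range s)) (h : wedge s w = 0) : ∃ r : T, w = r • s := by
  obtain ⟨r₀, hr₀⟩ := exists_smul_eq_smul_of_wedge_eq_zero h hf
  obtain ⟨r₁, hr₁⟩ := exists_smul_eq_smul_of_wedge_eq_zero h hg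
  exact exists_eq_smul_of_isRelPrime hfg hf₀ (ne_zero_of_mem_span_range hf₀ hf) hr₀ hr₁

end KernelBasis

section MaximalMinors

variable {T : Type*} {n : ℕ}

/-- The square matrix obtained from `Φ` by adding the two rows `α` and `β` at the bottom. -/
def bordered (Φ : Matrix (Fin n) (Fin (n + 2)) T) (α β : Fin (n + 2) → T) :
    Matrix (Fin (n + 2)) (Fin (n + 2)) T :=
  (fromRows Φ (of ![α, β])).submatrix finSumFinEquiv.symm id

variable {Φ : Matrix (Fin n) (Fin (n + 2)) T}

lemma bordered_castAdd (α β : Fin (n + 2) → T) (r : Fin n) :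
    bordered Φ α β (Fin.castAdd 2 r) = Φ r := by
  ext; simp [bordered]

lemma bordered_natAdd (α β : Fin (n + 2) → T) (r : Fin 2) :
    bordered Φ α β (Fin.natAdd n r) = ![α, β] r := by
  ext; simp [bordered]

lemma bordered_updateRow_natAdd_zero (α β γ : Fin (n + 2) → T) :
    (bordered Φ α β).updateRow (Fin.natAdd n 0) γ = bordered Φ γ β := by
  ext r j
  induction r using Fin.addCases with
  | left r => simp [updateRow_apply, bordered_castAdd, Fin.ext_iff, r.is_lt.ne]
  | right r => fin_cases r <;> simp [updateRow_apply, bordered_natAdd]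

lemma bordered_updateRow_natAdd_one (α β γ : Fin (n + 2) → T) :
    (bordered Φ α β).updateRow (Fin.natAdd n 1) γ = bordered Φ α γ := by
  ext r j
  induction r using Fin.addCases with
  | left r =>
    have : (r : ℕ) ≠ n + 1 := by omega
    simp [updateRow_apply, bordered_castAdd, Fin.ext_iff, this]
  | right r => fin_cases r <;> simp [updateRow_apply, bordered_natAdd]

variable [CommRing T]

/-- The vector `w ↦ det (Φ; c; w)` of maximal minors of `Φ` with one extra row `c`: the
generalized cross product of the rows of `Φ` and `c`, which lies in the kernel of `Φ`. -/
def kernelVector (Φ : Matrix (Fin n) (Fin (n + 2)) T) (c : Fin (n + 2) → T) : Fin (n + 2) → T :=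
  fun j => (bordered Φ c (Pi.single j 1)).det

/-- The maximal minors of `Φ`, indexed by the two omitted columns, with signs: the Plücker
coordinates of the kernel of `Φ`. -/
def plucker (Φ : Matrix (Fin n) (Fin (n + 2)) T) : Fin (n + 2) → Fin (n + 2) → T :=
  fun i j => (bordered Φ (Pi.single i 1) (Pi.single j 1)).det

lemma det_mul_dotProduct_eq_sum_det_updateRow {ι : Type*} [Fintype ι] [DecidableEq ι]
    (B : Matrix ι ι T) (γ s : ι → T) :
    B.det * (γ ⬝ᵥ s) = ∑ r, (B.updateRow r γ).det * (B *ᵥ s) r := by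
  have h : cramer Bᵀ γ ᵥ* B = B.det • γ := by
    rw [← mulVec_transpose, mulVec_cramer, det_transpose]
  calc B.det * (γ ⬝ᵥ s) = cramer Bᵀ γ ⬝ᵥ B *ᵥ s := by
        rw [dotProduct_mulVec, h, smul_dotProduct, smul_eq_mul]
    _ = _ := by simp only [dotProduct, cramer_transpose_apply]

lemma det_bordered_exchange {s : Fin (n + 2) → T} (hs : Φ *ᵥ s = 0) (α β γ : Fin (n + 2) → T) :
    (bordered Φ α β).det * (γ ⬝ᵥ s) =
      (bordered Φ γ β).det * (α ⬝ᵥ s) + (bordered Φ α γ).det * (β ⬝ᵥ s) := by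
  have hΦ (r : Fin n) : Φ r ⬝ᵥ s = 0 := congrFun hs r
  rw [det_mul_dotProduct_eq_sum_det_updateRow, Fin.sum_univ_add, Fin.sum_univ_two]
  simp [mulVec, bordered_castAdd, bordered_natAdd, hΦ, bordered_updateRow_natAdd_zero,
    bordered_updateRow_natAdd_one]

lemma wedge_kernelVector {s : Fin (n + 2) → T} (hs : Φ *ᵥ s = 0) (c : Fin (n + 2) → T) :
    wedge s (kernelVector Φ c) = (c ⬝ᵥ s) • plucker Φ := by
  ext i j
  have h := det_bordered_exchange hs c (Pi.single j 1) (Pi.single i 1)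
  simp only [single_dotProduct, one_mul] at h
  simp only [wedge_apply, kernelVector, plucker, Pi.smul_apply, smul_eq_mul]
  linear_combination h

lemma dotProduct_kernelVector (c γ : Fin (n + 2) → T) :
    γ ⬝ᵥ kernelVector Φ c = (bordered Φ c γ).det := by
  rw [det_eq_sum_mul_adjugate_row _ (Fin.natAdd n 1)]
  simp [adjugate_apply, bordered_updateRow_natAdd_one, bordered_natAdd, kernelVector, dotProduct]

lemma mulVec_kernelVector (c : Fin (n + 2) → T) : Φ *ᵥ kernelVector Φ c = 0 := by
  ext r
  rw [mulVec, dotProduct_kernelVector]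
  exact det_zero_of_row_eq (i := Fin.castAdd 2 r) (j := Fin.natAdd n 1)
    (fun h => by simp only [Fin.ext_iff, Fin.val_castAdd, Fin.val_natAdd] at h; omega)
    (by rw [bordered_castAdd, bordered_natAdd]; rfl)

lemma exists_pow_smul_wedge_eq_smul_plucker {A : Matrix (Fin (n + 2)) (Fin n) T} {t : T}
    (hA : Φ * A = t • 1) {s w : Fin (n + 2) → T} (hs : Φ *ᵥ s = 0) (hw : Φ *ᵥ w = 0) :
    ∃ r : T, t ^ n • wedge s w = r • plucker Φ := by
  let C : Matrix (Fin (n + 2)) (Fin n ⊕ Fin 2) T := fromCols A (of ![s, w])ᵀ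
  refine ⟨(C.submatrix id finSumFinEquiv.symm).det, funext₂ fun i j => ?_⟩
  have hker : Φ * (of ![s, w])ᵀ = 0 := by
    ext r c
    fin_cases c
    · exact congrFun hs r
    · exact congrFun hw r
  have hminor : (of ![Pi.single i 1, Pi.single j 1] : Matrix (Fin 2) (Fin (n + 2)) T) *
      (of ![s, w])ᵀ = !![s i, w i; s j, w j] := by
    ext r c
    fin_cases r <;> fin_cases c <;> simp [mul_apply, Pi.single_apply]
  symm
  calc (C.submatrix id finSumFinEquiv.symm).det * plucker Φ i j
      = ((fromRows Φ (of ![Pi.single i 1, Pi.single j 1]) * C).submatrix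
          finSumFinEquiv.symm finSumFinEquiv.symm).det := by
        rw [plucker, mul_comm, ← det_mul, bordered, ← submatrix_mul _ _ _ _ _ Function.bijective_id]
    _ = t ^ n * (s i * w j - s j * w i) := by
        rw [det_submatrix_equiv_self, fromRows_mul_fromCols, hA, hker, det_fromBlocks_zero₁₂,
          hminor, det_smul, det_one, det_fin_two_of, Fintype.card_fin]
        ring

lemma exists_mulVec_eq_zero_and_wedge_ne_zero [IsDomain T]
    (Φ : Matrix (Fin n) (Fin (n + 2)) T) {s : Fin (n + 2) → T} (hs : s ≠ 0) :
    ∃ w, Φ *ᵥ w = 0 ∧ wedge s w ≠ 0 := by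
  by_contra! h
  obtain ⟨i, hi⟩ := Function.ne_iff.mp hs
  let Ψ : Matrix (Fin (n + 1)) (Fin (n + 2)) T := of (vecCons (Pi.single i 1) Φ)
  have hinj : Function.Injective Ψ.mulVecLin := by
    refine (injective_iff_map_eq_zero _).mpr fun w hw => ?_
    rw [mulVecLin_apply, show Ψ *ᵥ w = vecCons _ (Φ *ᵥ w) from cons_mulVec _ _ _, cons_eq_zero_iff,
      single_one_dotProduct] at hw
    exact eq_zero_of_wedge_eq_zero hi (h w hw.2) hw.1
  have := le_of_fin_injective T Ψ.mulVecLin hinj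
  omega

lemma plucker_ne_zero [IsDomain T] {A : Matrix (Fin (n + 2)) (Fin n) T} {t : T} (ht : t ≠ 0)
    (hA : Φ * A = t • 1) {s : Fin (n + 2) → T} (hs₀ : s ≠ 0) (hs : Φ *ᵥ s = 0) :
    plucker Φ ≠ 0 := by
  intro h
  obtain ⟨w, hw, hsw⟩ := exists_mulVec_eq_zero_and_wedge_ne_zero Φ hs₀
  obtain ⟨r, hr⟩ := exists_pow_smul_wedge_eq_smul_plucker hA hs hw
  rw [h, smul_zero, smul_eq_zero] at hr
  exact hr.elim (pow_ne_zero n ht) hsw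

lemma isKernelBasis_of_wedge_eq_plucker [IsDomain T] [DecompositionMonoid T]
    {s v : Fin (n + 2) → T} (hs : Φ *ᵥ s = 0) (hv : Φ *ᵥ v = 0) (hsv : wedge s v = plucker Φ)
    {A B : Matrix (Fin (n + 2)) (Fin n) T} {f g : T} (hfg : IsRelPrime f g) (hf₀ : f ≠ 0)
    (hA : Φ * A = f • 1) (hB : Φ * B = g • 1)
    {f' g' : T} (hfg' : IsRelPrime f' g') (hf'₀ : f' ≠ 0) (hf' : f' ∈ Ideal.span (Set.range s))
    (hg' : g' ∈ Ideal.span (Set.range s)) : IsKernelBasis Φ s v := by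
  have hs₀ : s ≠ 0 := ne_zero_of_mem_span_range hf'₀ hf'
  have hΦ : plucker Φ ≠ 0 := plucker_ne_zero hf₀ hA hs₀ hs
  refine ⟨hs, hv, fun w hw => ?_⟩
  obtain ⟨r₀, hr₀⟩ := exists_pow_smul_wedge_eq_smul_plucker hA hs hw
  obtain ⟨r₁, hr₁⟩ := exists_pow_smul_wedge_eq_smul_plucker hB hs hw
  obtain ⟨r, hr⟩ := exists_eq_smul_of_isRelPrime hfg.pow (pow_ne_zero n hf₀) hΦ hr₀ hr₁
  have hwedge : wedge s (w - r • v) = 0 := by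
    rw [map_sub, map_smul, hsv, hr, sub_self]
  obtain ⟨q, hq⟩ := exists_eq_smul_of_wedge_eq_zero hfg' hf'₀ hf' hg' hwedge
  refine ⟨(q, r), by simp only [← hq, sub_add_cancel], fun ⟨q', r'⟩ hw' => ?_⟩
  have hr' : r' = r := smul_left_injective T hΦ <| by
    simpa [wedge_self, hsv, hr] using (congrArg (wedge s) hw').symm
  have hq' : q' = q := smul_left_injective T hs₀ <| by
    simp only [← hq, hw', hr', add_sub_cancel_right]
  rw [hq', hr']

end MaximalMinors

section DividingByRelPrime

variable {T ι κ : Type*} [CommRing T] [DecompositionMonoid T]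

lemma exists_eq_smul_of_smul_eq_smul {f g : T} (hfg : IsRelPrime f g) {u u' : ι → T}
    (h : g • u = f • u') : ∃ U : ι → T, u = f • U := by
  have hdvd (i : ι) : f ∣ u i := hfg.dvd_of_dvd_mul_left ⟨u' i, congrFun h i⟩
  choose U hU using hdvd
  exact ⟨U, funext hU⟩

lemma exists_mulVec_eq_zero_and_wedge_eq_of_smul_sub_smul [IsDomain T] [Fintype ι]
    {Φ : Matrix κ ι T} {s V V' : ι → T} {ω : ι → ι → T} (hs : Φ *ᵥ s = 0)
    (hV : Φ *ᵥ V = 0) {f g h h' : T} (hfg : IsRelPrime f g) (hf : f ≠ 0) (hsV : wedge s V = f • ω)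
    (hVV' : g • V - f • V' = (h * f + h' * g) • s) : ∃ U, Φ *ᵥ U = 0 ∧ wedge s U = ω := by
  have hcross : g • (V - h' • s) = f • (V' + h • s) := by
    rw [← sub_eq_zero] at hVV' ⊢
    rw [← hVV']
    module
  obtain ⟨U, hU⟩ := exists_eq_smul_of_smul_eq_smul hfg hcross
  refine ⟨U, smul_right_injective _ hf ?_, smul_right_injective _ hf ?_⟩
  · simp only [← mulVec_smul, ← hU, mulVec_sub, mulVec_smul Φ h', hV, hs, smul_zero,
      sub_zero]
  · simp only [← map_smul, ← hU, map_sub, map_smul (wedge s) h', wedge_self, hsV, smul_zero,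
      sub_zero]

end DividingByRelPrime

section Graded

variable {R σ ι κ M : Type*} [CommRing R] [AddCommGroup M]

/-- The tuple `v` is a homogeneous element of degree `d` of `⊕ R[σ](-a i)`, for the grading of
`R[σ]` by the weights `w`. -/
def IsHomogeneousTuple (w : σ → M) (a : ι → M) (d : M) (v : ι → MvPolynomial σ R) : Prop :=
  ∀ i, IsWeightedHomogeneous w (v i) (d - a i)

/-- The matrix `Φ` is that of a degree-preserving map `⊕ R[σ](-a i) → ⊕ R[σ](-b j)`, for the
grading of `R[σ]` by the weights `w`. -/
def IsHomogeneousMatrix (w : σ → M) (a : ι → M) (b : κ → M)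
    (Φ : Matrix κ ι (MvPolynomial σ R)) : Prop :=
  ∀ j i, IsWeightedHomogeneous w (Φ j i) (a i - b j)

/-- The component of degree `d` of an element of `⊕ R[σ](-a i)`. -/
noncomputable def tupleComponent (w : σ → M) (a : ι → M) (d : M) (v : ι → MvPolynomial σ R) :
    ι → MvPolynomial σ R :=
  fun i => weightedHomogeneousComponent w (d - a i) (v i)

variable {w : σ → M} {a : ι → M} {b : κ → M} {d e : M} {s v : ι → MvPolynomial σ R}
  {f : MvPolynomial σ R} {Φ : Matrix κ ι (MvPolynomial σ R)}

lemma weightedHomogeneousComponent_mul (hf : IsWeightedHomogeneous w f d) (e : M)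
    (g : MvPolynomial σ R) :
    weightedHomogeneousComponent w e (f * g) = f * weightedHomogeneousComponent w (e - d) g := by
  classical
  let _ := weightedGradedAlgebra R w
  have h := DirectSum.coe_decompose_mul_add_of_left_mem (weightedHomogeneousSubmodule R w)
    (a := f) (b := g) (i := d) (j := e - d) hf
  rw [add_sub_cancel] at h
  have decompose_apply (q : MvPolynomial σ R) (i : M) :
      (DirectSum.decompose (weightedHomogeneousSubmodule R w) q i : MvPolynomial σ R) =
        weightedHomogeneousComponent w i q := weightedDecomposition.decompose'_apply R w q i
  rwa [decompose_apply, decompose_apply] at h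

lemma tupleComponent_isHomogeneousTuple (v : ι → MvPolynomial σ R) :
    IsHomogeneousTuple w a d (tupleComponent w a d v) :=
  fun _ => weightedHomogeneousComponent_isWeightedHomogeneous _ _

lemma IsHomogeneousTuple.tupleComponent_eq (hv : IsHomogeneousTuple w a d v) :
    tupleComponent w a d v = v :=
  funext fun i => (hv i).weightedHomogeneousComponent_same

lemma IsHomogeneousTuple.smul (hf : IsWeightedHomogeneous w f d)
    (hv : IsHomogeneousTuple w a e v) : IsHomogeneousTuple w a (d + e) (f • v) :=
  fun i => by simpa only [add_sub_assoc, Pi.smul_apply, smul_eq_mul] using hf.mul (hv i)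

lemma IsHomogeneousTuple.sub (hs : IsHomogeneousTuple w a d s)
    (hv : IsHomogeneousTuple w a d v) : IsHomogeneousTuple w a d (s - v) :=
  fun i => (weightedHomogeneousSubmodule R w (d - a i)).sub_mem (hs i) (hv i)

lemma IsHomogeneousTuple.tupleComponent_smul (hs : IsHomogeneousTuple w a d s)
    (f : MvPolynomial σ R) :
    tupleComponent w a e (f • s) = weightedHomogeneousComponent w (e - d) f • s :=
  funext fun i => by
    simp only [tupleComponent, Pi.smul_apply, smul_eq_mul, mul_comm _ (s i),
      weightedHomogeneousComponent_mul (hs i), sub_sub_sub_cancel_right]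

lemma IsHomogeneousTuple.wedge_tupleComponent (hs : IsHomogeneousTuple w a d s)
    (v : ι → MvPolynomial σ R) (i j : ι) :
    wedge s (tupleComponent w a e v) i j =
      weightedHomogeneousComponent w (d + e - a i - a j) (wedge s v i j) := by
  rw [wedge_apply, wedge_apply, map_sub, weightedHomogeneousComponent_mul (hs i),
    weightedHomogeneousComponent_mul (hs j), tupleComponent, tupleComponent]
  congr 4 <;> abel

lemma IsHomogeneousMatrix.mulVec_tupleComponent [Fintype ι] (hΦ : IsHomogeneousMatrix w a b Φ)
    (v : ι → MvPolynomial σ R) :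
    Φ *ᵥ tupleComponent w a d v = tupleComponent w b d (Φ *ᵥ v) :=
  funext fun j => by
    simp only [mulVec, dotProduct, tupleComponent, map_sum,
      weightedHomogeneousComponent_mul (hΦ j _), sub_sub_sub_cancel_right]

lemma IsHomogeneousMatrix.mulVec_tupleComponent_eq_zero [Fintype ι]
    (hΦ : IsHomogeneousMatrix w a b Φ) (hv : Φ *ᵥ v = 0) : Φ *ᵥ tupleComponent w a d v = 0 := by
  rw [hΦ.mulVec_tupleComponent, hv]
  exact funext fun _ => map_zero _

lemma IsHomogeneousMatrix.isWeightedHomogeneous_det [Fintype ι] [DecidableEq ι] {β : ι → M}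
    {B : Matrix ι ι (MvPolynomial σ R)} (hB : IsHomogeneousMatrix w a β B) :
    IsWeightedHomogeneous w B.det (∑ i, a i - ∑ i, β i) := by
  rw [det_apply]
  refine IsWeightedHomogeneous.sum _ _ _ fun τ _ => ?_
  rw [← mem_weightedHomogeneousSubmodule]
  refine Submodule.smul_of_tower_mem _ _ ?_
  have h := IsWeightedHomogeneous.prod Finset.univ _ _ fun i _ => hB (τ i) i
  rwa [Finset.sum_sub_distrib, Equiv.sum_comp τ β] at h

end Graded

section GradedMaximalMinors

variable {R σ M : Type*} [CommRing R] [AddCommGroup M] {w : σ → M} {n : ℕ}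
  {a : Fin (n + 2) → M} {b : Fin n → M} {d e : M} {f : MvPolynomial σ R}
  {s v : Fin (n + 2) → MvPolynomial σ R} {Φ : Matrix (Fin n) (Fin (n + 2)) (MvPolynomial σ R)}

lemma isWeightedHomogeneous_single_one_apply {ι : Type*} [DecidableEq ι] {a : ι → M} (i j : ι) :
    IsWeightedHomogeneous w ((Pi.single i 1 : ι → MvPolynomial σ R) j) (a j - a i) := by
  rcases eq_or_ne j i with rfl | hji
  · simpa using isWeightedHomogeneous_one R w
  · simpa [hji] using isWeightedHomogeneous_zero R w _

lemma IsHomogeneousMatrix.bordered_single (hΦ : IsHomogeneousMatrix w a b Φ)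
    (i j : Fin (n + 2)) :
    IsHomogeneousMatrix w a (Fin.append b ![a i, a j])
      (bordered Φ (Pi.single i 1) (Pi.single j 1)) := by
  intro r c
  induction r using Fin.addCases with
  | left r => simpa [bordered_castAdd] using hΦ r c
  | right r =>
    fin_cases r <;>
      simpa [bordered_natAdd] using isWeightedHomogeneous_single_one_apply _ c

lemma IsHomogeneousMatrix.isWeightedHomogeneous_plucker (hΦ : IsHomogeneousMatrix w a b Φ)
    (i j : Fin (n + 2)) :
    IsWeightedHomogeneous w (plucker Φ i j) (∑ i, a i - ∑ j, b j - a i - a j) := by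
  have h := (hΦ.bordered_single i j).isWeightedHomogeneous_det
  simpa only [plucker, Fin.sum_univ_add (Fin.append _ _), Fin.append_left, Fin.append_right,
    Fin.sum_univ_two, cons_val_zero, cons_val_one, ← sub_sub] using h

lemma IsHomogeneousMatrix.wedge_tupleComponent_eq_smul_plucker
    (hΦ : IsHomogeneousMatrix w a b Φ) (hs : IsHomogeneousTuple w a d s)
    (hf : IsWeightedHomogeneous w f e) (hsv : wedge s v = f • plucker Φ) :
    wedge s (tupleComponent w a (e + (∑ i, a i - ∑ j, b j) - d) v) = f • plucker Φ := by
  ext1 i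
  ext1 j
  rw [hs.wedge_tupleComponent, hsv]
  refine IsWeightedHomogeneous.weightedHomogeneousComponent_same ?_
  have hdegree : d + (e + (∑ i, a i - ∑ j, b j) - d) - a i - a j =
      e + (∑ i, a i - ∑ j, b j - a i - a j) := by abel
  rw [hdegree]
  exact hf.mul (hΦ.isWeightedHomogeneous_plucker i j)

lemma IsHomogeneousMatrix.exists_wedge_eq_smul_plucker (hΦ : IsHomogeneousMatrix w a b Φ)
    (hs : IsHomogeneousTuple w a d s) (hΦs : Φ *ᵥ s = 0) (hf : IsWeightedHomogeneous w f e)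
    (hfs : f ∈ Ideal.span (Set.range s)) :
    ∃ v, IsHomogeneousTuple w a (e + (∑ i, a i - ∑ j, b j) - d) v ∧ Φ *ᵥ v = 0 ∧
      wedge s v = f • plucker Φ := by
  obtain ⟨c, rfl⟩ := Ideal.mem_span_range_iff_exists_fun.mp hfs
  exact ⟨_, tupleComponent_isHomogeneousTuple (kernelVector Φ c),
    hΦ.mulVec_tupleComponent_eq_zero (mulVec_kernelVector c),
    hΦ.wedge_tupleComponent_eq_smul_plucker hs hf (wedge_kernelVector hΦs c)⟩

end GradedMaximalMinors

section PowersOfVariables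

variable {R σ : Type*} [CommRing R]

lemma mem_span_range_X_pow [Fintype σ] {p : ℕ} {f : MvPolynomial σ R}
    {δ : ℤ} (hf : IsWeightedHomogeneous (fun _ => (1 : ℤ)) f δ)
    (hδ : (Fintype.card σ : ℤ) * (p - 1) < δ) :
    f ∈ Ideal.span (Set.range fun i : σ => (X i : MvPolynomial σ R) ^ p) := by
  rw [f.as_sum]
  refine Ideal.sum_mem _ fun e he => ?_
  have hdeg : ∑ i, (e i : ℤ) = δ := by
    rw [← hf (mem_support_iff.mp he), Finsupp.weight_apply, Finsupp.sum_fintype _ _ (by simp)]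
    simp
  obtain ⟨i, -, hi⟩ := Finset.exists_lt_of_sum_lt (s := Finset.univ) (f := fun _ : σ => (p - 1 : ℤ))
    (g := fun i => (e i : ℤ)) (by
      rwa [hdeg, Finset.sum_const, Finset.card_univ, nsmul_eq_mul])
  rw [monomial_eq, Finsupp.prod_fintype _ _ (by simp)]
  refine Ideal.mul_mem_left _ _ (Ideal.mem_of_dvd _ ?_ (Ideal.subset_span ⟨i, rfl⟩))
  exact (pow_dvd_pow _ (by omega)).trans (Finset.dvd_prod_of_mem _ (Finset.mem_univ i))

lemma isRelPrime_X_pow_X_pow [IsDomain R] [UniqueFactorizationMonoid R] {i j : σ} (hij : i ≠ j)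
    (p q : ℕ) : IsRelPrime ((X i : MvPolynomial σ R) ^ p) (X j ^ q) :=
  ((X_prime.irreducible.isRelPrime_iff_not_dvd).mpr (by simpa using hij)).pow

lemma isWeightedHomogeneous_X_pow (i : σ) (p : ℕ) :
    IsWeightedHomogeneous (fun _ => (1 : ℤ)) ((X i : MvPolynomial σ R) ^ p) (p : ℤ) := by
  simpa using (isWeightedHomogeneous_X R (fun _ => (1 : ℤ)) i).pow p

lemma X_pow_ne_zero [IsDomain R] (i : σ) (p : ℕ) : (X i : MvPolynomial σ R) ^ p ≠ 0 :=
  pow_ne_zero p (X_ne_zero i)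

end PowersOfVariables

section PlaneKernel

variable {K : Type*} [Field K] {n : ℕ} {a : Fin (n + 2) → ℤ} {b : Fin n → ℤ} {d : ℤ} {p : ℕ}
  {s : Fin (n + 2) → MvPolynomial (Fin 2) K}
  {Φ : Matrix (Fin n) (Fin (n + 2)) (MvPolynomial (Fin 2) K)}

lemma exists_smul_sub_smul_eq_smul {V₀ V₁ : Fin (n + 2) → MvPolynomial (Fin 2) K} {e : ℤ}
    (hs : IsHomogeneousTuple (fun _ => (1 : ℤ)) a d s)
    (hX : ∀ i : Fin 2, (X i : MvPolynomial (Fin 2) K) ^ p ∈ Ideal.span (Set.range s))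
    (hV₀ : IsHomogeneousTuple (fun _ => (1 : ℤ)) a e V₀)
    (hV₁ : IsHomogeneousTuple (fun _ => (1 : ℤ)) a e V₁) (hde : d + p ≤ e + 1)
    (hwedge : (X 1 : MvPolynomial (Fin 2) K) ^ p • wedge s V₀ =
      (X 0 : MvPolynomial (Fin 2) K) ^ p • wedge s V₁) :
    ∃ h₀ h₁ : MvPolynomial (Fin 2) K,
      (X 1 : MvPolynomial (Fin 2) K) ^ p • V₀ - (X 0 : MvPolynomial (Fin 2) K) ^ p • V₁ =
        (h₀ * X 0 ^ p + h₁ * X 1 ^ p) • s := by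
  obtain ⟨g, hg⟩ := exists_eq_smul_of_wedge_eq_zero (isRelPrime_X_pow_X_pow zero_ne_one p p)
    (X_pow_ne_zero 0 p) (hX 0) (hX 1)
    (w := (X 1 : MvPolynomial (Fin 2) K) ^ p • V₀ - (X 0 : MvPolynomial (Fin 2) K) ^ p • V₁)
    (by rw [map_sub, map_smul, map_smul, hwedge, sub_self])
  have hcomponent := ((hV₀.smul (isWeightedHomogeneous_X_pow 1 p)).sub
    (hV₁.smul (isWeightedHomogeneous_X_pow 0 p))).tupleComponent_eq
  rw [hg, hs.tupleComponent_smul] at hcomponent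
  have hmem := mem_span_range_X_pow (p := p)
    (weightedHomogeneousComponent_isWeightedHomogeneous (w := fun _ : Fin 2 => (1 : ℤ))
      (p + e - d) g) (by simp only [Fintype.card_fin]; push_cast; linarith)
  obtain ⟨h, hh⟩ := Ideal.mem_span_range_iff_exists_fun.mp hmem
  rw [Fin.sum_univ_two] at hh
  exact ⟨h 0, h 1, by rw [hh, hcomponent, hg]⟩

lemma IsHomogeneousMatrix.exists_wedge_eq_plucker
    (hΦ : IsHomogeneousMatrix (fun _ => (1 : ℤ)) a b Φ)
    (hs : IsHomogeneousTuple (fun _ => (1 : ℤ)) a d s) (hΦs : Φ *ᵥ s = 0)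
    (hX : ∀ i : Fin 2, (X i : MvPolynomial (Fin 2) K) ^ p ∈ Ideal.span (Set.range s))
    (hd : 2 * d ≤ ∑ i, a i - ∑ j, b j + 1) :
    ∃ v, IsHomogeneousTuple (fun _ => (1 : ℤ)) a (∑ i, a i - ∑ j, b j - d) v ∧ Φ *ᵥ v = 0 ∧
      wedge s v = plucker Φ := by
  obtain ⟨V₀, hV₀, hΦV₀, hsV₀⟩ := hΦ.exists_wedge_eq_smul_plucker hs hΦs
    (isWeightedHomogeneous_X_pow 0 p) (hX 0)
  obtain ⟨V₁, hV₁, -, hsV₁⟩ := hΦ.exists_wedge_eq_smul_plucker hs hΦs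
    (isWeightedHomogeneous_X_pow 1 p) (hX 1)
  obtain ⟨h₀, h₁, hV⟩ := exists_smul_sub_smul_eq_smul hs hX hV₀ hV₁ (by linarith)
    (by rw [hsV₀, hsV₁, smul_comm])
  obtain ⟨U, hΦU, hsU⟩ := exists_mulVec_eq_zero_and_wedge_eq_of_smul_sub_smul hΦs hΦV₀
    (isRelPrime_X_pow_X_pow zero_ne_one p p) (X_pow_ne_zero 0 p) hsV₀ hV
  have hsU' := hΦ.wedge_tupleComponent_eq_smul_plucker hs
    (isWeightedHomogeneous_one K (fun _ => (1 : ℤ))) (hsU.trans (one_smul _ _).symm)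
  rw [zero_add, one_smul] at hsU'
  exact ⟨_, tupleComponent_isHomogeneousTuple U, hΦ.mulVec_tupleComponent_eq_zero hΦU, hsU'⟩

lemma IsHomogeneousMatrix.exists_isKernelBasis
    (hΦ : IsHomogeneousMatrix (fun _ => (1 : ℤ)) a b Φ)
    (hs : IsHomogeneousTuple (fun _ => (1 : ℤ)) a d s) (hΦs : Φ *ᵥ s = 0)
    (hX : ∀ i : Fin 2, (X i : MvPolynomial (Fin 2) K) ^ p ∈ Ideal.span (Set.range s))
    (hd : 2 * d ≤ ∑ i, a i - ∑ j, b j + 1) {q : ℕ}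
    {A : Fin 2 → Matrix (Fin (n + 2)) (Fin n) (MvPolynomial (Fin 2) K)}
    (hA : ∀ i, Φ * A i = (X i : MvPolynomial (Fin 2) K) ^ q • 1) :
    ∃ v, IsHomogeneousTuple (fun _ => (1 : ℤ)) a (∑ i, a i - ∑ j, b j - d) v ∧
      IsKernelBasis Φ s v := by
  obtain ⟨v, hv, hΦv, hsv⟩ := hΦ.exists_wedge_eq_plucker hs hΦs hX hd
  exact ⟨v, hv, isKernelBasis_of_wedge_eq_plucker hΦs hΦv hsv
    (isRelPrime_X_pow_X_pow zero_ne_one q q) (X_pow_ne_zero 0 q) (hA 0) (hA 1)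
    (isRelPrime_X_pow_X_pow zero_ne_one p p) (X_pow_ne_zero 0 p) (hX 0) (hX 1)⟩

end PlaneKernel

section MinimalDegree

variable {R σ ι κ : Type*} [CommRing R] {f : MvPolynomial σ R} {d : ℤ}

lemma weight_one_eq_degree (e : σ →₀ ℕ) :
    Finsupp.weight (fun _ : σ => (1 : ℤ)) e = (e.degree : ℤ) := by
  rw [Finsupp.weight_apply, Finsupp.sum, Finsupp.degree_apply]
  simp

lemma exists_coeff_ne_zero_and_degree_eq_totalDegree (hf : f ≠ 0) :
    ∃ e, coeff e f ≠ 0 ∧ e.degree = f.totalDegree := by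
  obtain ⟨e, he, hdeg⟩ := Finset.exists_mem_eq_sup f.support (support_nonempty.mpr hf)
    Finsupp.degree
  exact ⟨e, mem_support_iff.mp he, hdeg.symm⟩

lemma totalDegree_eq_of_isWeightedHomogeneous
    (hf : IsWeightedHomogeneous (fun _ => (1 : ℤ)) f d) (hf₀ : f ≠ 0) :
    (f.totalDegree : ℤ) = d := by
  obtain ⟨e, he, hdeg⟩ := exists_coeff_ne_zero_and_degree_eq_totalDegree hf₀
  rw [← hdeg, ← weight_one_eq_degree, hf he]

lemma weightedHomogeneousComponent_totalDegree_ne_zero (hf : f ≠ 0) :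
    weightedHomogeneousComponent (fun _ : σ => (1 : ℤ)) f.totalDegree f ≠ 0 := by
  classical
  obtain ⟨e, he, hdeg⟩ := exists_coeff_ne_zero_and_degree_eq_totalDegree hf
  refine ne_zero_iff.mpr ⟨e, ?_⟩
  rwa [coeff_weightedHomogeneousComponent, if_pos (by rw [weight_one_eq_degree, hdeg])]

variable {K : Type*} [Field K] {a : ι → ℤ} {b : κ → ℤ}

lemma totalDegree_pos_of_prime {f : MvPolynomial σ K} (hf : Prime f) : 0 < f.totalDegree := by
  refine Nat.pos_of_ne_zero fun hdeg => hf.not_isUnit ?_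
  have hC := totalDegree_eq_zero_iff_eq_C.mp hdeg
  have hcoeff : coeff 0 f ≠ 0 := fun h => hf.ne_zero (by rw [hC, h, map_zero])
  rw [hC]
  exact hcoeff.isUnit.map C

lemma IsHomogeneousMatrix.exists_not_dvd_of_minimal [Fintype ι]
    {Φ : Matrix κ ι (MvPolynomial σ K)} {s : ι → MvPolynomial σ K}
    (hΦ : IsHomogeneousMatrix (fun _ => (1 : ℤ)) a b Φ)
    (hs : IsHomogeneousTuple (fun _ => (1 : ℤ)) a d s) (hΦs : Φ *ᵥ s = 0) (hs₀ : s ≠ 0)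
    (hmin : ∀ e < d, ∀ v, IsHomogeneousTuple (fun _ => (1 : ℤ)) a e v → Φ *ᵥ v = 0 → v = 0)
    {f : MvPolynomial σ K} (hf : Prime f) : ∃ i, ¬f ∣ s i := by
  by_contra! hdvd
  choose t ht using hdvd
  obtain rfl : s = f • t := funext ht
  have hΦt : Φ *ᵥ t = 0 := by
    rw [mulVec_smul] at hΦs
    exact (smul_eq_zero.mp hΦs).resolve_left hf.ne_zero
  have hcomponent : tupleComponent (fun _ => (1 : ℤ)) a (d - f.totalDegree) t = 0 :=
    hmin _ (by have := totalDegree_pos_of_prime hf; omega) _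
      (tupleComponent_isHomogeneousTuple t) (hΦ.mulVec_tupleComponent_eq_zero hΦt)
  obtain ⟨i, hi⟩ := Function.ne_iff.mp hs₀
  have hti : t i ≠ 0 := right_ne_zero_of_mul hi
  have hdeg := totalDegree_eq_of_isWeightedHomogeneous (hs i) hi
  rw [Pi.smul_apply, smul_eq_mul, totalDegree_mul_of_isDomain hf.ne_zero hti] at hdeg
  refine weightedHomogeneousComponent_totalDegree_ne_zero hti ?_
  rw [show (totalDegree (t i) : ℤ) = d - f.totalDegree - a i by push_cast at hdeg; linarith]
  exact congrFun hcomponent i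

end MinimalDegree

section HomogeneousMaximalIdeal

attribute [local instance] weightedGradedAlgebra

variable {K σ : Type*} [Field K]

lemma weightedHomogeneousComponent_zero_eq_C_coeff (f : MvPolynomial σ K) :
    weightedHomogeneousComponent (fun _ : σ => (1 : ℤ)) 0 f = C (coeff 0 f) := by
  classical
  ext e
  rw [coeff_weightedHomogeneousComponent, weight_one_eq_degree, coeff_C]
  simp only [Int.natCast_eq_zero, Finsupp.degree_eq_zero_iff, eq_comm (a := e)]
  split_ifs with h
  · rw [← h]
  · rfl

lemma le_ker_constantCoeff_of_isHomogeneous {I : Ideal (MvPolynomial σ K)}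
    (hI : I.IsHomogeneous (weightedHomogeneousSubmodule K (fun _ : σ => (1 : ℤ))))
    (hI₁ : I ≠ ⊤) : I ≤ RingHom.ker (constantCoeff : MvPolynomial σ K →+* K) := by
  intro f hf
  by_contra hcoeff
  have hC := weightedHomogeneousComponent_mem_of_mem K (fun _ : σ => (1 : ℤ)) hI hf 0
  rw [weightedHomogeneousComponent_zero_eq_C_coeff] at hC
  exact hI₁ (I.eq_top_of_isUnit_mem hC ((Ne.isUnit hcoeff).map C))

lemma X_mem_of_isMaximal_of_isHomogeneous {I : Ideal (MvPolynomial σ K)} (hI : I.IsMaximal)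
    (hhom : I.IsHomogeneous (weightedHomogeneousSubmodule K (fun _ : σ => (1 : ℤ)))) (j : σ) :
    X j ∈ I := by
  rw [hI.eq_of_le (RingHom.ker_ne_top _) (le_ker_constantCoeff_of_isHomogeneous hhom hI.ne_top)]
  exact constantCoeff_X K j

end HomogeneousMaximalIdeal

section PrimeChains

lemma isMaximal_of_lt_of_lt_of_lt {T : Type*} [CommRing T] (hT : ringKrullDim T = 3)
    {p₀ p₁ p₂ p₃ : Ideal T} [p₀.IsPrime] [p₁.IsPrime] [p₂.IsPrime] [p₃.IsPrime]
    (h₀₁ : p₀ < p₁) (h₁₂ : p₁ < p₂) (h₂₃ : p₂ < p₃) : p₃.IsMaximal := by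
  have : FiniteRingKrullDim T := by
    rw [finiteRingKrullDim_iff_ne_bot_and_top, hT]
    exact ⟨by decide, by decide⟩
  have hheight : 3 ≤ p₃.height := calc
    (3 : ℕ∞) = 0 + 1 + 1 + 1 := by norm_num
    _ ≤ p₀.height + 1 + 1 + 1 := by gcongr; exact zero_le
    _ ≤ p₁.height + 1 + 1 := by gcongr; exact Ideal.height_add_one_le_of_lt_of_isPrime h₀₁
    _ ≤ p₂.height + 1 := by gcongr; exact Ideal.height_add_one_le_of_lt_of_isPrime h₁₂
    _ ≤ p₃.height := Ideal.height_add_one_le_of_lt_of_isPrime h₂₃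
  refine Ideal.isMaximal_of_height_eq_ringKrullDim
    (le_antisymm Ideal.height_le_ringKrullDim_of_isPrime ?_)
  rw [hT]
  exact WithBot.coe_le_coe.mpr hheight

lemma exists_prime_span_singleton_lt {T ι : Type*} [CommRing T] [IsDomain T]
    [UniqueFactorizationMonoid T] {s : ι → T} (hs₀ : s ≠ 0)
    (hs : ∀ f, Prime f → ∃ i, ¬f ∣ s i) {p : Ideal T} (hp : p.IsPrime)
    (hsp : Ideal.span (Set.range s) ≤ p) : ∃ f, Prime f ∧ Ideal.span {f} < p := by
  have hmem (i : ι) : s i ∈ p := hsp (Ideal.subset_span ⟨i, rfl⟩)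
  have hp₀ : p ≠ ⊥ := by
    rintro rfl
    exact hs₀ (funext hmem)
  obtain ⟨f, hfp, hf⟩ := hp.exists_mem_prime_of_ne_bot hp₀
  obtain ⟨i, hi⟩ := hs f hf
  refine ⟨f, hf, lt_of_le_of_ne ((Ideal.span_singleton_le_iff_mem p).mpr hfp) ?_⟩
  rintro rfl
  exact hi (Ideal.mem_span_singleton.mp (hmem i))

end PrimeChains

section GeneralLinearForm

variable {K : Type*} [Field K]

lemma linform_eq_linearCombination (c : Fin 3 → K) :
    linform c = Fintype.linearCombination K (X : Fin 3 → MvPolynomial (Fin 3) K) c := by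
  simp only [linform, Fintype.linearCombination_apply, smul_eq_C_mul]

lemma eval_linform (c d : Fin 3 → K) : eval c (linform d) = ∑ i, c i * d i := by
  simp only [linform, map_sum, map_mul, eval_C, eval_X, mul_comm]

lemma exists_ne_zero_forall_linform_notMem {I : Ideal (MvPolynomial (Fin 3) K)} {j : Fin 3}
    (hj : X j ∉ I) : ∃ P : MvPolynomial (Fin 3) K, P ≠ 0 ∧ ∀ c, eval c P ≠ 0 → linform c ∉ I := by
  let W := (I.restrictScalars K).comap (Fintype.linearCombination K X)
  have hW : Pi.single j 1 ∉ W := by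
    rwa [Submodule.mem_comap, Fintype.linearCombination_apply_single, one_smul]
  obtain ⟨f, hf, hWf⟩ := Submodule.exists_le_ker_of_notMem hW
  have heval (c : Fin 3 → K) : eval c (linform fun i => f (Pi.single i 1)) = f c := by
    rw [eval_linform, LinearMap.pi_apply_eq_sum_univ f c]
    refine Finset.sum_congr rfl fun i _ => ?_
    rw [smul_eq_mul]
    congr 2
    exact funext fun j => by simp only [Pi.single_apply, eq_comm]
  refine ⟨linform fun i => f (Pi.single i 1), fun hP => hf ?_, fun c hc hcI => hc ?_⟩
  · rw [← heval, hP, map_zero]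
  · rw [linform_eq_linearCombination] at hcI
    rw [heval, hWf hcI]

lemma exists_ne_zero_forall_linform_notMem_minimalPrimes (I : Ideal (MvPolynomial (Fin 3) K)) :
    ∃ P : MvPolynomial (Fin 3) K, P ≠ 0 ∧ ∀ c, eval c P ≠ 0 →
      ∀ p ∈ I.minimalPrimes, ∀ j, X j ∉ p → linform c ∉ p := by
  have avoid (p : Ideal (MvPolynomial (Fin 3) K)) : ∃ P : MvPolynomial (Fin 3) K, P ≠ 0 ∧
      ∀ c, eval c P ≠ 0 → ∀ j, X j ∉ p → linform c ∉ p := by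
    by_cases hp : ∃ j, X j ∉ p
    · obtain ⟨j, hj⟩ := hp
      obtain ⟨P, hP₀, hP⟩ := exists_ne_zero_forall_linform_notMem hj
      exact ⟨P, hP₀, fun c hc _ _ => hP c hc⟩
    · exact ⟨1, one_ne_zero, fun c _ j hj => absurd ⟨j, hj⟩ hp⟩
  choose P hP₀ hP using avoid
  have hfinite := I.finite_minimalPrimes_of_isNoetherianRing
  refine ⟨∏ p ∈ hfinite.toFinset, P p, Finset.prod_ne_zero_iff.mpr fun p _ => hP₀ p,
    fun c hc p hp => hP p c ?_⟩
  rw [map_prod, Finset.prod_ne_zero_iff] at hc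
  exact hc p (hfinite.mem_toFinset.mpr hp)

attribute [local instance] weightedGradedAlgebra

lemma isHomogeneous_span_range_sup_span_linform {ι : Type*} {a : ι → ℤ} {d : ℤ}
    {s : ι → MvPolynomial (Fin 3) K} (hs : IsHomogeneousTuple (fun _ => (1 : ℤ)) a d s)
    (c : Fin 3 → K) : (Ideal.span (Set.range s) ⊔ Ideal.span {linform c}).IsHomogeneous
      (weightedHomogeneousSubmodule K (fun _ : Fin 3 => (1 : ℤ))) := by
  refine (Ideal.homogeneous_span _ _ ?_).sup (Ideal.homogeneous_span _ _ ?_)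
  · rintro _ ⟨i, rfl⟩
    exact ⟨_, hs i⟩
  · rintro _ rfl
    exact ⟨_, homog_linform c⟩

lemma IsHomogeneousTuple.exists_ne_zero_forall_X_mem_radical {ι : Type*} {a : ι → ℤ} {d : ℤ}
    {s : ι → MvPolynomial (Fin 3) K} (hs : IsHomogeneousTuple (fun _ => (1 : ℤ)) a d s)
    (hs₀ : s ≠ 0) (hprime : ∀ f, Prime f → ∃ i, ¬f ∣ s i) :
    ∃ P : MvPolynomial (Fin 3) K, P ≠ 0 ∧ ∀ c, eval c P ≠ 0 → ∀ j : Fin 3,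
      X j ∈ (Ideal.span (Set.range s) ⊔ Ideal.span {linform c}).radical := by
  obtain ⟨P, hP₀, hP⟩ :=
    exists_ne_zero_forall_linform_notMem_minimalPrimes (Ideal.span (Set.range s))
  refine ⟨P, hP₀, fun c hc j => ?_⟩
  rw [(isHomogeneous_span_range_sup_span_linform hs c).radical_eq, Ideal.mem_sInf]
  rintro q ⟨hqhom, hle, hq⟩
  obtain ⟨hsq, hLq⟩ := sup_le_iff.mp hle
  obtain ⟨p, hp, hpq⟩ := Ideal.exists_minimalPrimes_le hsq
  by_cases hj : X j ∈ p
  · exact hpq hj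
  have hlt : p < q := lt_of_le_of_ne hpq fun h =>
    hP c hc p hp j hj (h ▸ (Ideal.span_singleton_le_iff_mem q).mp hLq)
  have hpprime : p.IsPrime := hp.1.1
  obtain ⟨f, hf, hfp⟩ := exists_prime_span_singleton_lt hs₀ hprime hpprime hp.1.2
  have hfprime : (Ideal.span {f}).IsPrime := (Ideal.span_singleton_prime hf.ne_zero).mpr hf
  have hbot : ⊥ < Ideal.span {f} :=
    bot_lt_iff_ne_bot.mpr (Ideal.span_singleton_eq_bot.not.mpr hf.ne_zero)
  have hdim : ringKrullDim (MvPolynomial (Fin 3) K) = 3 := by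
    simp [ringKrullDim_of_isNoetherianRing]
  exact X_mem_of_isMaximal_of_isHomogeneous (isMaximal_of_lt_of_lt_of_lt hdim hbot hfp hlt)
    hqhom j

end GeneralLinearForm

section RestrictionToLine

lemma isWeightedHomogeneous_aeval {R σ τ M : Type*} [CommRing R] [AddCommMonoid M] {w : σ → M}
    {w' : τ → M} {g : σ → MvPolynomial τ R} (hg : ∀ i, IsWeightedHomogeneous w' (g i) (w i))
    {f : MvPolynomial σ R} {d : M} (hf : IsWeightedHomogeneous w f d) :
    IsWeightedHomogeneous w' (aeval g f) d := by
  rw [f.as_sum, map_sum]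
  refine IsWeightedHomogeneous.sum _ _ _ fun e he => ?_
  rw [aeval_monomial]
  refine IsWeightedHomogeneous.C_mul ?_ _
  rw [← hf (mem_support_iff.mp he), Finsupp.weight_apply]
  exact IsWeightedHomogeneous.prod _ _ _ fun i _ => (hg i).pow _

lemma isWeightedHomogeneous_rename {R σ τ M : Type*} [CommRing R] [AddCommMonoid M] {w : τ → M}
    (g : σ → τ) {f : MvPolynomial σ R} {d : M} (hf : IsWeightedHomogeneous (w ∘ g) f d) :
    IsWeightedHomogeneous w (rename g f) d := by
  rw [rename_eq_aeval]
  exact isWeightedHomogeneous_aeval (fun i => isWeightedHomogeneous_X R w (g i)) hf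

variable {K : Type*} [Field K]

lemma C_mul_C_inv {σ : Type*} {x : K} (hx : x ≠ 0) :
    C x * C x⁻¹ = (1 : MvPolynomial σ K) := by
  rw [← map_mul, mul_inv_cancel₀ hx, map_one]

/-- Restriction of polynomials to the line `linform c = 0` in the plane, parametrized by the first
two coordinates. It has this meaning only for `c 2 ≠ 0`. -/
noncomputable def restrictToLine (c : Fin 3 → K) :
    MvPolynomial (Fin 3) K →ₐ[K] MvPolynomial (Fin 2) K :=
  aeval ![X 0, X 1, -C (c 2)⁻¹ * (C (c 0) * X 0 + C (c 1) * X 1)]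

lemma restrictToLine_X_castSucc (c : Fin 3 → K) (i : Fin 2) :
    restrictToLine c (X i.castSucc) = X i := by
  fin_cases i <;> simp [restrictToLine]

lemma restrictToLine_X_two (c : Fin 3 → K) :
    restrictToLine c (X 2) = -C (c 2)⁻¹ * (C (c 0) * X 0 + C (c 1) * X 1) :=
  aeval_X _ _

lemma restrictToLine_rename (c : Fin 3 → K) (f : MvPolynomial (Fin 2) K) :
    restrictToLine c (rename Fin.castSucc f) = f := by
  have hcomp : (restrictToLine c).comp (rename Fin.castSucc) = AlgHom.id K _ :=
    algHom_ext fun i => by simp [restrictToLine_X_castSucc]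
  exact DFunLike.congr_fun hcomp f

lemma isWeightedHomogeneous_restrictToLine (c : Fin 3 → K) {f : MvPolynomial (Fin 3) K} {d : ℤ}
    (hf : IsWeightedHomogeneous (fun _ => (1 : ℤ)) f d) :
    IsWeightedHomogeneous (fun _ => (1 : ℤ)) (restrictToLine c f) d := by
  have hX (i : Fin 2) := isWeightedHomogeneous_X K (fun _ => (1 : ℤ)) i
  refine isWeightedHomogeneous_aeval (fun i => ?_) hf
  fin_cases i
  · exact hX 0
  · exact hX 1
  · have hC : IsWeightedHomogeneous (fun _ : Fin 2 => (1 : ℤ)) (-C (c 2)⁻¹) 0 := by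
      rw [← C_neg]
      exact isWeightedHomogeneous_C _ _
    exact zero_add (1 : ℤ) ▸ hC.mul (((hX 0).C_mul _).add ((hX 1).C_mul _))

lemma restrictToLine_linform {c : Fin 3 → K} (hc : c 2 ≠ 0) : restrictToLine c (linform c) = 0 := by
  have hX₀ := restrictToLine_X_castSucc c 0
  have hX₁ := restrictToLine_X_castSucc c 1
  simp only [Fin.castSucc_zero, Fin.castSucc_one] at hX₀ hX₁
  simp only [linform, Fin.sum_univ_three, map_add, map_mul, algHom_C, algebraMap_eq, hX₀, hX₁,
    restrictToLine_X_two]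
  linear_combination (-(C (c 0) * X 0) - C (c 1) * X 1) * C_mul_C_inv hc

lemma mk_rename_restrictToLine {c : Fin 3 → K} (hc : c 2 ≠ 0) (f : MvPolynomial (Fin 3) K) :
    Ideal.Quotient.mk (Ideal.span {linform c}) (rename Fin.castSucc (restrictToLine c f)) =
      Ideal.Quotient.mk (Ideal.span {linform c}) f := by
  have hcomp : (Ideal.Quotient.mkₐ K (Ideal.span {linform c})).comp
      ((rename Fin.castSucc).comp (restrictToLine c)) =
        Ideal.Quotient.mkₐ K (Ideal.span {linform c}) := by
    ext1 i
    simp only [AlgHom.comp_apply, Ideal.Quotient.mkₐ_eq_mk]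
    induction i using Fin.lastCases with
    | cast i => rw [restrictToLine_X_castSucc, rename_X]
    | last =>
      rw [Ideal.Quotient.eq, Ideal.mem_span_singleton]
      refine ⟨-C (c 2)⁻¹, ?_⟩
      simp only [Fin.reduceLast, restrictToLine_X_two, linform, Fin.sum_univ_three, map_add,
        map_mul, map_neg, algHom_C, algebraMap_eq, rename_X, Fin.castSucc_zero, Fin.castSucc_one]
      linear_combination X 2 * C_mul_C_inv hc
  exact DFunLike.congr_fun hcomp f

/-- The isomorphism between the coordinate ring `K[x,y,z] ⧸ (linform c)` of a line not through
`(0 : 0 : 1)` and `K[x,y]`. -/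
noncomputable def lineEquiv (c : Fin 3 → K) (hc : c 2 ≠ 0) :
    MvPolynomial (Fin 2) K ≃ₐ[K] MvPolynomial (Fin 3) K ⧸ Ideal.span {linform c} :=
  AlgEquiv.ofAlgHom ((Ideal.Quotient.mkₐ K _).comp (rename Fin.castSucc))
    (Ideal.Quotient.liftₐ _ (restrictToLine c) fun f hf => by
      obtain ⟨g, rfl⟩ := Ideal.mem_span_singleton.mp hf
      rw [map_mul, restrictToLine_linform hc, zero_mul])
    (Ideal.Quotient.algHom_ext _ (AlgHom.ext (mk_rename_restrictToLine hc)))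
    (AlgHom.ext (restrictToLine_rename c))

lemma lineEquiv_comp_restrictToLine {c : Fin 3 → K} (hc : c 2 ≠ 0) :
    lineEquiv c hc ∘ restrictToLine c = Ideal.Quotient.mk (Ideal.span {linform c}) :=
  funext (mk_rename_restrictToLine hc)

lemma exists_X_pow_mem_span_range_restrictToLine {ι : Type*} {s : ι → MvPolynomial (Fin 3) K}
    {c : Fin 3 → K} (hc : c 2 ≠ 0)
    (hX : ∀ j : Fin 3, X j ∈ (Ideal.span (Set.range s) ⊔ Ideal.span {linform c}).radical) :
    ∃ p : ℕ, ∀ i : Fin 2, (X i : MvPolynomial (Fin 2) K) ^ p ∈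
      Ideal.span (Set.range (restrictToLine c ∘ s)) := by
  set J := Ideal.span (Set.range s) ⊔ Ideal.span {linform c}
  have hJ : J ≤ (Ideal.span (Set.range (restrictToLine c ∘ s))).comap (restrictToLine c) := by
    refine sup_le (Ideal.span_le.mpr ?_) ((Ideal.span_singleton_le_iff_mem _).mpr ?_)
    · rintro _ ⟨i, rfl⟩
      exact Ideal.subset_span ⟨i, rfl⟩
    · rw [Ideal.mem_comap, restrictToLine_linform hc]
      exact Ideal.zero_mem _
  obtain ⟨p, hp⟩ := J.exists_radical_pow_le_of_fg J.radical.fg_of_isNoetherianRing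
  refine ⟨p, fun i => ?_⟩
  have hmem := hJ (hp (Ideal.pow_mem_pow (hX i.castSucc) p))
  rwa [Ideal.mem_comap, map_pow, restrictToLine_X_castSucc] at hmem

end RestrictionToLine

section KernelOnGeneralLine

variable {K : Type*} [Field K] {n : ℕ} {a : Fin (n + 2) → ℤ} {b : Fin n → ℤ}
  {Φ : Matrix (Fin n) (Fin (n + 2)) (MvPolynomial (Fin 3) K)}

lemma mem_Nd_iff {d : ℤ} {v : Fin (n + 2) → MvPolynomial (Fin 3) K} :
    v ∈ Nd n a Φ d ↔ IsHomogeneousTuple (fun _ => (1 : ℤ)) a d v ∧ Φ *ᵥ v = 0 := by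
  rw [Nd, Submodule.mem_inf, mem_degPiece]
  rfl

lemma FiniteColength.exists_mulVec_eq_single_X_pow (h : FiniteColength n a b Φ) :
    ∃ q : ℕ, ∀ (z : Fin 3) (j : Fin n), ∃ v, Φ *ᵥ v = Pi.single j (X z ^ q) := by
  obtain ⟨D, hD⟩ := h
  refine ⟨∑ j, (D - b j).natAbs, fun z j => ?_⟩
  set q := ∑ j, (D - b j).natAbs
  have hq : (D - b j).natAbs ≤ q :=
    Finset.single_le_sum_of_canonicallyOrdered (f := fun j => (D - b j).natAbs) (Finset.mem_univ j)
  have hsingle : Pi.single j (X z ^ q) ∈ degPiece (K := K) n b (q + b j) := by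
    refine mem_degPiece.mpr fun i => ?_
    obtain rfl | hij := eq_or_ne i j
    · rw [Pi.single_eq_same, add_sub_cancel_right]
      exact isWeightedHomogeneous_X_pow z q
    · rw [Pi.single_eq_of_ne hij]
      exact isWeightedHomogeneous_zero K _ _
  obtain ⟨v, -, hv⟩ := hD (q + b j) (by omega) hsingle
  exact ⟨v, hv⟩

lemma FiniteColength.exists_mul_eq_X_pow_smul_one (h : FiniteColength n a b Φ) :
    ∃ (q : ℕ) (A : Fin 3 → Matrix (Fin (n + 2)) (Fin n) (MvPolynomial (Fin 3) K)),
      ∀ z, Φ * A z = (X z : MvPolynomial (Fin 3) K) ^ q • 1 := by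
  obtain ⟨q, hq⟩ := h.exists_mulVec_eq_single_X_pow
  choose v hv using hq
  refine ⟨q, fun z => (of (v z))ᵀ, fun z => ?_⟩
  ext1 i j
  have hij : (Φ * (of (v z))ᵀ) i j = (Φ *ᵥ v z j) i := rfl
  rw [hij, hv]
  simp [Pi.single_apply, one_apply]

lemma exists_isKernelBasis_of_forall_X_mem_radical
    (hΦ : ∀ j i, homog (Φ j i) (a i - b j)) {q : ℕ}
    {A : Fin 3 → Matrix (Fin (n + 2)) (Fin n) (MvPolynomial (Fin 3) K)}
    (hA : ∀ z, Φ * A z = (X z : MvPolynomial (Fin 3) K) ^ q • 1) {d : ℤ}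
    (hd : 2 * d ≤ ∑ i, a i - ∑ j, b j + 1) {s : Fin (n + 2) → MvPolynomial (Fin 3) K}
    (hs : s ∈ Nd n a Φ d) {c : Fin 3 → K} (hc : c 2 ≠ 0)
    (hX : ∀ j : Fin 3, X j ∈ (Ideal.span (Set.range s) ⊔ Ideal.span {linform c}).radical) :
    ∃ v ∈ degPiece (K := K) (n + 2) a (∑ i, a i - ∑ j, b j - d),
      IsKernelBasis (Φ.map (Ideal.Quotient.mk (Ideal.span {linform c})))
        (Ideal.Quotient.mk (Ideal.span {linform c}) ∘ s)
        (Ideal.Quotient.mk (Ideal.span {linform c}) ∘ v) := by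
  obtain ⟨hs, hΦs⟩ := mem_Nd_iff.mp hs
  have hΦc : IsHomogeneousMatrix (fun _ => (1 : ℤ)) a b (Φ.map (restrictToLine c)) :=
    fun j i => isWeightedHomogeneous_restrictToLine c (hΦ j i)
  have hsc : IsHomogeneousTuple (fun _ => (1 : ℤ)) a d (restrictToLine c ∘ s) :=
    fun i => isWeightedHomogeneous_restrictToLine c (hs i)
  have hΦsc : Φ.map (restrictToLine c) *ᵥ (restrictToLine c ∘ s) = 0 := by
    rw [map_mulVec_comp, hΦs]
    exact funext fun _ => map_zero _
  have hAc (i : Fin 2) : Φ.map (restrictToLine c) * (A i.castSucc).map (restrictToLine c) =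
      (X i : MvPolynomial (Fin 2) K) ^ q • 1 := by
    rw [← Matrix.map_mul, hA, Matrix.map_smul' _ _ _ (map_mul _),
      Matrix.map_one _ (map_zero _) (map_one _), map_pow, restrictToLine_X_castSucc]
  obtain ⟨p, hp⟩ := exists_X_pow_mem_span_range_restrictToLine hc hX
  obtain ⟨v, hv, hbasis⟩ := hΦc.exists_isKernelBasis hsc hΦsc hp hd hAc
  have hmap := hbasis.map (lineEquiv c hc)
  rw [Matrix.map_map, ← Function.comp_assoc, lineEquiv_comp_restrictToLine] at hmap
  exact ⟨rename Fin.castSucc ∘ v,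
    mem_degPiece.mpr fun i => isWeightedHomogeneous_rename _ (hv i), hmap⟩

end KernelOnGeneralLine

theorem statement12_general {K : Type*} [Field K] (n : ℕ) (a : Fin (n + 2) → ℤ) (b : Fin n → ℤ)
    (Φ : Matrix (Fin n) (Fin (n + 2)) (MvPolynomial (Fin 3) K))
    (hΦ : ∀ j i, homog (Φ j i) (a i - b j)) (hfin : FiniteColength n a b Φ)
    (d e : ℤ) (hde : d + e = ∑ i, a i - ∑ j, b j) (hle : d ≤ e + 1)
    (hd : IsLeast {d | Nd n a Φ d ≠ ⊥} d) :
    ∃ P : MvPolynomial (Fin 3) K, P ≠ 0 ∧ ∀ c : Fin 3 → K, eval c P ≠ 0 →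
      ∃ u v : Fin (n + 2) → MvPolynomial (Fin 3) K ⧸ Ideal.span {linform c},
        (∃ u' ∈ degPiece (K := K) (n + 2) a d,
          ∀ i, Ideal.Quotient.mk (Ideal.span {linform c}) (u' i) = u i) ∧
        (∃ v' ∈ degPiece (K := K) (n + 2) a e,
          ∀ i, Ideal.Quotient.mk (Ideal.span {linform c}) (v' i) = v i) ∧
        IsKernelBasis (Φ.map (Ideal.Quotient.mk (Ideal.span {linform c}))) u v := by
  obtain rfl : e = ∑ i, a i - ∑ j, b j - d := by omega
  obtain ⟨s, hsN, hs₀⟩ := Submodule.exists_mem_ne_zero_of_ne_bot hd.1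
  obtain ⟨hs, hΦs⟩ := mem_Nd_iff.mp hsN
  have hmin (δ : ℤ) (hδ : δ < d) (v : Fin (n + 2) → MvPolynomial (Fin 3) K)
      (hv : IsHomogeneousTuple (fun _ => (1 : ℤ)) a δ v) (hΦv : Φ *ᵥ v = 0) : v = 0 := by
    by_contra hv₀
    exact hδ.not_ge (hd.2 (Submodule.ne_bot_iff _ |>.mpr ⟨v, mem_Nd_iff.mpr ⟨hv, hΦv⟩, hv₀⟩))
  obtain ⟨P, hP₀, hP⟩ := hs.exists_ne_zero_forall_X_mem_radical hs₀ fun f hf =>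
    IsHomogeneousMatrix.exists_not_dvd_of_minimal hΦ hs hΦs hs₀ hmin hf
  obtain ⟨q, A, hA⟩ := hfin.exists_mul_eq_X_pow_smul_one
  refine ⟨P * X 2, mul_ne_zero hP₀ (X_ne_zero 2), fun c hc => ?_⟩
  rw [map_mul, eval_X] at hc
  obtain ⟨v, hv, hbasis⟩ := exists_isKernelBasis_of_forall_X_mem_radical hΦ hA (by omega) hsN
    (right_ne_zero_of_mul hc) (hP c (left_ne_zero_of_mul hc))
  exact ⟨_, _, ⟨s, (Submodule.mem_inf.mp hsN).1, fun _ => rfl⟩, ⟨v, hv, fun _ => rfl⟩, hbasis⟩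

set_option synthInstance.maxHeartbeats 1000000 in
/-- Suppose `a - b = 2m + 1` is odd and `N_m ≠ 0` (unstable case), with
index of instability `k = max{ j : N_{m-j} ≠ 0 }`. Then for a general linear form `L`, writing
`S = R/(L)`, the kernel of the induced map `φ̄ : ⊕ S(-a_i) → ⊕ S(-b_j)` is a free graded
`S`-module isomorphic to `S(-(m-k)) ⊕ S(-(m+k+1))`: it has a free basis consisting of two
homogeneous elements, of degrees `m - k` and `m + k + 1`. -/
theorem statement12 {K : Type*} [Field K] [IsAlgClosed K] [CharZero K]
    (n : ℕ) (a : Fin (n + 2) → ℤ) (b : Fin n → ℤ)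
    (Φ : Matrix (Fin n) (Fin (n + 2)) (MvPolynomial (Fin 3) K))
    (hΦ : ∀ j i, homog (Φ j i) (a i - b j))
    (hfin : FiniteColength n a b Φ)
    (m : ℤ) (hm : (∑ i, a i) - (∑ j, b j) = 2 * m + 1)
    (hunstable : Nd n a Φ m ≠ ⊥)
    (k : ℤ) (hk₁ : Nd n a Φ (m - k) ≠ ⊥) (hk₂ : ∀ j : ℤ, Nd n a Φ (m - j) ≠ ⊥ → j ≤ k) :
    ∃ P : MvPolynomial (Fin 3) K, P ≠ 0 ∧ ∀ c : Fin 3 → K, eval c P ≠ 0 →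
      ∃ u v : Fin (n + 2) → MvPolynomial (Fin 3) K ⧸ Ideal.span {linform c},
        (∃ u' ∈ degPiece (K := K) (n + 2) a (m - k),
          ∀ i, Ideal.Quotient.mk (Ideal.span {linform c}) (u' i) = u i) ∧
        (∃ v' ∈ degPiece (K := K) (n + 2) a (m + k + 1),
          ∀ i, Ideal.Quotient.mk (Ideal.span {linform c}) (v' i) = v i) ∧
        (Φ.map (Ideal.Quotient.mk (Ideal.span {linform c}))).mulVec u = 0 ∧
        (Φ.map (Ideal.Quotient.mk (Ideal.span {linform c}))).mulVec v = 0 ∧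
        ∀ w : Fin (n + 2) → MvPolynomial (Fin 3) K ⧸ Ideal.span {linform c},
          (Φ.map (Ideal.Quotient.mk (Ideal.span {linform c}))).mulVec w = 0 →
          ∃! rs : (MvPolynomial (Fin 3) K ⧸ Ideal.span {linform c}) ×
              (MvPolynomial (Fin 3) K ⧸ Ideal.span {linform c}),
            w = rs.1 • u + rs.2 • v := by
  exact statement12_general n a b Φ hΦ hfin (m - k) (m + k + 1) (by omega)
    (by have := hk₂ 0 (by rwa [sub_zero]); omega)
    ⟨hk₁, fun d hd => by have := hk₂ (m - d) (by rwa [sub_sub_cancel]); omega⟩
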